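/- (Soundness of the embedding) For any subexponential signature Σ = (I, ⪯, f) with f(i) ⊆ {C, W, E, A1, A2} (associativity allowed): if an acLL sequent Γ ⊢ A is provable in acLL, then ⊢ (Γ̂⊥, Â) is provable in CacLL over the same signature. -/

import Mathlib

set_option autoImplicit false

namespace NACLL

/-- Structures: binary trees whose leaves are formulas, with an empty structure.
`(∅,Γ)` and `(Γ,∅)` are identified with `Γ` via the smart constructor `comma`. -/
inductive Struct (F : Type) : Type where
  | emp : Struct F
  | leaf : F → Struct F
  | pair : Struct F → Struct F → Struct F

namespace Struct

/-- Pairing of structures, erasing empty substructures. -/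
def comma {F : Type} : Struct F → Struct F → Struct F
  | .emp, Δ => Δ
  | Γ, .emp => Γ
  | Γ, Δ => .pair Γ Δ

def map {F G : Type} (f : F → G) : Struct F → Struct G
  | .emp => .emp
  | .leaf a => .leaf (f a)
  | .pair l r => .pair (map f l) (map f r)

/-- Number of formula leaves of a structure. -/
def nleaves {F : Type} : Struct F → ℕ
  | .emp => 0
  | .leaf _ => 1
  | .pair l r => nleaves l + nleaves r

/-- All formula leaves of a structure satisfy a predicate. -/
def Forall {F : Type} (p : F → Prop) : Struct F → Prop
  | .emp => True
  | .leaf a => p a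
  | .pair l r => Forall p l ∧ Forall p r

end Struct

/-- Structural equivalence: the reflexive, symmetric, transitive closure of
top-level exchange and top-level associativity. -/
inductive StEquiv {F : Type} : Struct F → Struct F → Prop where
  | refl (Γ : Struct F) : StEquiv Γ Γ
  | symm {Γ Δ : Struct F} : StEquiv Γ Δ → StEquiv Δ Γ
  | trans {Γ Δ Θ : Struct F} : StEquiv Γ Δ → StEquiv Δ Θ → StEquiv Γ Θ
  | exch (Γ Δ : Struct F) : StEquiv (Γ.comma Δ) (Δ.comma Γ)
  | assoc (Γ Δ Θ : Struct F) : StEquiv (Γ.comma (Δ.comma Θ)) ((Γ.comma Δ).comma Θ)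

/-- Contexts with one hole. -/
inductive Ctx (F : Type) : Type where
  | hole : Ctx F
  | pairL : Ctx F → Struct F → Ctx F
  | pairR : Struct F → Ctx F → Ctx F

namespace Ctx

/-- Filling the hole of a context with a structure (empty substructures are erased). -/
def fill {F : Type} : Ctx F → Struct F → Struct F
  | .hole, Ξ => Ξ
  | .pairL R Δ, Ξ => (fill R Ξ).comma Δ
  | .pairR Γ R, Ξ => Γ.comma (fill R Ξ)

/-- A context viewed as a structure over `Option F`, the hole being the leaf `none`. -/
def toStruct {F : Type} : Ctx F → Struct (Option F)
  | .hole => .leaf none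
  | .pairL R Δ => (toStruct R).comma (Δ.map some)
  | .pairR Γ R => (Γ.map some).comma (toStruct R)

def size {F : Type} : Ctx F → ℕ
  | .hole => 0
  | .pairL R _ => size R + 2
  | .pairR _ R => size R + 1

/-- The designator. -/
def desi {F : Type} : Ctx F → Struct F
  | .hole => .emp
  | .pairL R Δ => desi (.pairR Δ R)
  | .pairR Γ .hole => Γ
  | .pairR Γ (.pairR Δ P) => desi (.pairR (Γ.comma Δ) P)
  | .pairR Γ (.pairL D Θp) => desi (.pairR (Θp.comma Γ) D)
termination_by c => size c
decreasing_by all_goals simp [size]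

/-- All formula leaves of a context (other than the hole) satisfy a predicate. -/
def Forall {F : Type} (p : F → Prop) : Ctx F → Prop
  | .hole => True
  | .pairL R Δ => Forall p R ∧ Δ.Forall p
  | .pairR Γ R => Γ.Forall p ∧ Forall p R

end Ctx

/-- Structural equivalence of one-hole contexts, treating the hole as a leaf. -/
def CtxEquiv {F : Type} (T X : Ctx F) : Prop := StEquiv T.toStruct X.toStruct

/-- Contexts with two holes (the first hole is the designated one). -/
inductive Ctx2 (F : Type) : Type where
  | splitLR : Ctx F → Ctx F → Ctx2 F
  | splitRL : Ctx F → Ctx F → Ctx2 F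
  | pairL : Ctx2 F → Struct F → Ctx2 F
  | pairR : Struct F → Ctx2 F → Ctx2 F

namespace Ctx2

/-- Filling the first hole of a two-hole context, yielding a one-hole context. -/
def fillFst {F : Type} : Ctx2 F → Struct F → Ctx F
  | .splitLR c1 c2, Δ => .pairR (c1.fill Δ) c2
  | .splitRL c2 c1, Δ => .pairL c2 (c1.fill Δ)
  | .pairL R Γ, Δ => .pairL (fillFst R Δ) Γ
  | .pairR Γ R, Δ => .pairR Γ (fillFst R Δ)

end Ctx2

end NACLL
namespace NACLL

/-- Structural axioms that a subexponential may license. -/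
inductive SubAx : Type where
  | C : SubAx
  | W : SubAx
  | E : SubAx
  | A1 : SubAx
  | A2 : SubAx
deriving DecidableEq

/-- A subexponential signature: a preordered set of indices together with an
upwardly closed assignment of licensed structural axioms. -/
structure Sig (I : Type) where
  le : I → I → Prop
  le_refl : ∀ i, le i i
  le_trans : ∀ {i j k}, le i j → le j k → le i k
  f : I → Set SubAx
  upclosed : ∀ {i j}, le i j → f i ⊆ f j

/-- Formulas of classical non-associative non-commutative multimodal linear logic. -/
inductive CForm (I : Type) : Type where
  | pos : ℕ → CForm I
  | neg : ℕ → CForm I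
  | tensor : CForm I → CForm I → CForm I
  | par : CForm I → CForm I → CForm I
  | one : CForm I
  | bot : CForm I
  | oplus : CForm I → CForm I → CForm I
  | with' : CForm I → CForm I → CForm I
  | zero : CForm I
  | top : CForm I
  | bang : I → CForm I → CForm I
  | quest : I → CForm I → CForm I

namespace CForm

/-- De Morgan dual, pushed to atomic scope (order-reversing on the multiplicatives). -/
def dual {I : Type} : CForm I → CForm I
  | .pos a => .neg a
  | .neg a => .pos a
  | .tensor A B => .par (dual B) (dual A)
  | .par A B => .tensor (dual B) (dual A)
  | .one => .bot
  | .bot => .one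
  | .oplus A B => .with' (dual A) (dual B)
  | .with' A B => .oplus (dual A) (dual B)
  | .zero => .top
  | .top => .zero
  | .bang i A => .quest i (dual A)
  | .quest i A => .bang i (dual A)

/-- The counter ♮ on formulas. -/
def counter {I : Type} : CForm I → ℤ
  | .pos _ => 0
  | .neg _ => 1
  | .tensor A B => counter A + counter B
  | .par A B => counter A + counter B - 1
  | .one => 0
  | .bot => 1
  | .oplus A _ => counter A
  | .with' A _ => counter A
  | .zero => 1
  | .top => 0
  | .bang _ A => counter A
  | .quest _ A => counter A

end CForm

/-- The counter ♮ extended to structures. -/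
def Struct.counter {I : Type} : Struct (CForm I) → ℤ
  | .emp => 0
  | .leaf A => A.counter
  | .pair l r => counter l + counter r

/-- All leaves of a (nonempty) structure are `?ᵏ`-formulas whose label licenses
the given structural axiom. -/
inductive QAll {I : Type} (σ : Sig I) (ax : SubAx) : Struct (CForm I) → Prop where
  | leaf {k : I} {F : CForm I} (h : ax ∈ σ.f k) : QAll σ ax (.leaf (.quest k F))
  | pair {Γ Δ : Struct (CForm I)} : QAll σ ax Γ → QAll σ ax Δ → QAll σ ax (.pair Γ Δ)

/-- `UpSet σ i Γ Γ'` holds iff `Γ^{↑i}` is defined and equal to `Γ'`: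
every leaf of `Γ` is a `?ᵏ`-formula which is kept when `i ⪯ k` and erased when
`i ⋠ k` and `W ∈ f(k)`. -/
inductive UpSet {I : Type} (σ : Sig I) (i : I) : Struct (CForm I) → Struct (CForm I) → Prop where
  | emp : UpSet σ i .emp .emp
  | keep {k : I} {F : CForm I} (h : σ.le i k) :
      UpSet σ i (.leaf (.quest k F)) (.leaf (.quest k F))
  | drop {k : I} {F : CForm I} (h1 : ¬ σ.le i k) (h2 : SubAx.W ∈ σ.f k) :
      UpSet σ i (.leaf (.quest k F)) .emp
  | pair {Γ Γ' Δ Δ' : Struct (CForm I)} :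
      UpSet σ i Γ Γ' → UpSet σ i Δ Δ' → UpSet σ i (.pair Γ Δ) (Γ'.comma Δ')

/-- Structures over `Option F` serve as multi-hole contexts: `none`-leaves are
holes. `fillAll T D` fills every hole with `D` (erasing empty substructures). -/
def fillAll {F : Type} : Struct (Option F) → Struct F → Struct F
  | .emp, _ => .emp
  | .leaf (some a), _ => .leaf a
  | .leaf none, D => D
  | .pair l r, D => (fillAll l D).comma (fillAll r D)

/-- Derivability in the one-sided classical sequent calculus CacLL over the
signature `σ`.  The Boolean flag indicates whether the cut rule may be used:
`CDer σ false` is cut-free CacLL, `CDer σ true` is CacLL extended with cut. -/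
inductive CDer {I : Type} (σ : Sig I) : Bool → Struct (CForm I) → Prop where
  | initP {b : Bool} (a : ℕ) :
      CDer σ b (.pair (.leaf (.pos a)) (.leaf (.neg a)))
  | initN {b : Bool} (a : ℕ) :
      CDer σ b (.pair (.leaf (.neg a)) (.leaf (.pos a)))
  | tensor {b : Bool} {Γ Δ : Struct (CForm I)} {F G : CForm I} :
      CDer σ b (Γ.comma (.leaf G)) → CDer σ b (Δ.comma (.leaf F)) →
      CDer σ b ((Γ.comma Δ).comma (.leaf (.tensor F G)))
  | par {b : Bool} (R : Ctx (CForm I)) {F G : CForm I} :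
      CDer σ b (R.fill (.pair (.leaf F) (.leaf G))) →
      CDer σ b (R.fill (.leaf (.par F G)))
  | oplus₁ {b : Bool} (R : Ctx (CForm I)) {F1 F2 : CForm I} :
      CDer σ b (R.fill (.leaf F1)) → CDer σ b (R.fill (.leaf (.oplus F1 F2)))
  | oplus₂ {b : Bool} (R : Ctx (CForm I)) {F1 F2 : CForm I} :
      CDer σ b (R.fill (.leaf F2)) → CDer σ b (R.fill (.leaf (.oplus F1 F2)))
  | with' {b : Bool} (R : Ctx (CForm I)) {F1 F2 : CForm I} :
      CDer σ b (R.fill (.leaf F1)) → CDer σ b (R.fill (.leaf F2)) →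
      CDer σ b (R.fill (.leaf (.with' F1 F2)))
  | bot {b : Bool} (R : Ctx (CForm I)) :
      CDer σ b (R.fill .emp) → CDer σ b (R.fill (.leaf .bot))
  | one {b : Bool} : CDer σ b (.leaf .one)
  | top {b : Bool} (R : Ctx (CForm I)) : CDer σ b (R.fill (.leaf .top))
  | exch {b : Bool} {Γ Δ : Struct (CForm I)} :
      CDer σ b (Δ.comma Γ) → CDer σ b (Γ.comma Δ)
  | assoc₁ {b : Bool} {Γ Δ Θ : Struct (CForm I)} :
      CDer σ b (Γ.comma (Δ.comma Θ)) → CDer σ b ((Γ.comma Δ).comma Θ)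
  | assoc₂ {b : Bool} {Γ Δ Θ : Struct (CForm I)} :
      CDer σ b ((Γ.comma Δ).comma Θ) → CDer σ b (Γ.comma (Δ.comma Θ))
  | prom {b : Bool} {Γ Γ' : Struct (CForm I)} {i : I} {F : CForm I} :
      UpSet σ i Γ Γ' → CDer σ b (Γ'.comma (.leaf F)) →
      CDer σ b (Γ.comma (.leaf (.bang i F)))
  | der {b : Bool} (R : Ctx (CForm I)) {i : I} {F : CForm I} :
      CDer σ b (R.fill (.leaf F)) → CDer σ b (R.fill (.leaf (.quest i F)))
  | qA1 {b : Bool} {Δ1 Δ2 Δ3 Γ : Struct (CForm I)} (h : QAll σ .A1 Γ) :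
      CDer σ b (((Δ1.comma Δ2).comma Δ3).comma Γ) →
      CDer σ b ((Δ1.comma (Δ2.comma Δ3)).comma Γ)
  | qA2 {b : Bool} {Δ1 Δ2 Δ3 Γ : Struct (CForm I)} (h : QAll σ .A2 Γ) :
      CDer σ b ((Δ1.comma (Δ2.comma Δ3)).comma Γ) →
      CDer σ b (((Δ1.comma Δ2).comma Δ3).comma Γ)
  | qE {b : Bool} {Δ1 Δ2 Γ : Struct (CForm I)} (h : QAll σ .E Γ) :
      CDer σ b ((Δ2.comma Δ1).comma Γ) → CDer σ b ((Δ1.comma Δ2).comma Γ)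
  | qW {b : Bool} (R : Ctx (CForm I)) {Δ : Struct (CForm I)} (h : QAll σ .W Δ) :
      CDer σ b (R.fill .emp) → CDer σ b (R.fill Δ)
  | qC {b : Bool} (R : Ctx2 (CForm I)) {Δ : Struct (CForm I)} (h : QAll σ .C Δ) :
      CDer σ b ((R.fillFst Δ).fill Δ) → CDer σ b ((R.fillFst .emp).fill Δ)
  | cut {Γ Δ : Struct (CForm I)} {A : CForm I} :
      CDer σ true (Γ.comma (.leaf A)) → CDer σ true ((Struct.leaf A.dual).comma Δ) →
      CDer σ true (Γ.comma Δ)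

end NACLL
namespace NACLL

/-- Formulas of intuitionistic non-associative non-commutative multimodal
linear logic (acLL). -/
inductive IForm (I : Type) : Type where
  | atom : ℕ → IForm I
  | tensor : IForm I → IForm I → IForm I
  | imp : IForm I → IForm I → IForm I    -- `imp A B` is A → B
  | limp : IForm I → IForm I → IForm I   -- `limp B A` is B ← A
  | oplus : IForm I → IForm I → IForm I
  | with' : IForm I → IForm I → IForm I
  | one : IForm I
  | top : IForm I
  | bang : I → IForm I → IForm I

/-- The positive translation of acLL formulas into CacLL formulas. -/
def IForm.pos {I : Type} : IForm I → CForm I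
  | .atom a => .pos a
  | .tensor A B => .tensor A.pos B.pos
  | .imp A B => .par A.pos.dual B.pos
  | .limp B A => .par B.pos A.pos.dual
  | .oplus A B => .oplus A.pos B.pos
  | .with' A B => .with' A.pos B.pos
  | .one => .one
  | .top => .top
  | .bang i A => .bang i A.pos

/-- The negative translation of structures of acLL formulas: it reverses the
order and takes the De Morgan dual of the positive translation on leaves. -/
def negTrans {I : Type} : Struct (IForm I) → Struct (CForm I)
  | .emp => .emp
  | .leaf A => .leaf A.pos.dual
  | .pair Γ Δ => (negTrans Δ).comma (negTrans Γ)

/-- All leaves of a (nonempty) structure are `!ᵏ`-formulas whose label licenses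
the given structural axiom. -/
inductive BAll {I : Type} (σ : Sig I) (ax : SubAx) : Struct (IForm I) → Prop where
  | leaf {k : I} {F : IForm I} (h : ax ∈ σ.f k) : BAll σ ax (.leaf (.bang k F))
  | pair {Γ Δ : Struct (IForm I)} : BAll σ ax Γ → BAll σ ax Δ → BAll σ ax (.pair Γ Δ)

/-- `IUpSet σ i Γ Γ'` holds iff `Γ^{↑i}` is defined and equal to `Γ'`. -/
inductive IUpSet {I : Type} (σ : Sig I) (i : I) : Struct (IForm I) → Struct (IForm I) → Prop where
  | emp : IUpSet σ i .emp .emp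
  | keep {k : I} {F : IForm I} (h : σ.le i k) :
      IUpSet σ i (.leaf (.bang k F)) (.leaf (.bang k F))
  | drop {k : I} {F : IForm I} (h1 : ¬ σ.le i k) (h2 : SubAx.W ∈ σ.f k) :
      IUpSet σ i (.leaf (.bang k F)) .emp
  | pair {Γ Γ' Δ Δ' : Struct (IForm I)} :
      IUpSet σ i Γ Γ' → IUpSet σ i Δ Δ' → IUpSet σ i (.pair Γ Δ) (Γ'.comma Δ')

/-- Derivability in the two-sided intuitionistic sequent calculus acLL over `σ`. -/
inductive IDer {I : Type} (σ : Sig I) : Struct (IForm I) → IForm I → Prop where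
  | init (A : IForm I) : IDer σ (.leaf A) A
  | tensorL (R : Ctx (IForm I)) {A B C : IForm I} :
      IDer σ (R.fill (.pair (.leaf A) (.leaf B))) C →
      IDer σ (R.fill (.leaf (.tensor A B))) C
  | tensorR {Γ Δ : Struct (IForm I)} {A B : IForm I} :
      IDer σ Γ A → IDer σ Δ B → IDer σ (Γ.comma Δ) (.tensor A B)
  | impL (R : Ctx (IForm I)) {Δ : Struct (IForm I)} {A B C : IForm I} :
      IDer σ Δ A → IDer σ (R.fill (.leaf B)) C →
      IDer σ (R.fill (Δ.comma (.leaf (.imp A B)))) C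
  | impR {Γ : Struct (IForm I)} {A B : IForm I} :
      IDer σ ((Struct.leaf A).comma Γ) B → IDer σ Γ (.imp A B)
  | limpL (R : Ctx (IForm I)) {Δ : Struct (IForm I)} {A B C : IForm I} :
      IDer σ Δ A → IDer σ (R.fill (.leaf B)) C →
      IDer σ (R.fill ((Struct.leaf (.limp B A)).comma Δ)) C
  | limpR {Γ : Struct (IForm I)} {A B : IForm I} :
      IDer σ (Γ.comma (.leaf A)) B → IDer σ Γ (.limp B A)
  | oplusL (R : Ctx (IForm I)) {A B C : IForm I} :
      IDer σ (R.fill (.leaf A)) C → IDer σ (R.fill (.leaf B)) C →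
      IDer σ (R.fill (.leaf (.oplus A B))) C
  | oplusR₁ {Γ : Struct (IForm I)} {A B : IForm I} : IDer σ Γ A → IDer σ Γ (.oplus A B)
  | oplusR₂ {Γ : Struct (IForm I)} {A B : IForm I} : IDer σ Γ B → IDer σ Γ (.oplus A B)
  | withL₁ (R : Ctx (IForm I)) {A B C : IForm I} :
      IDer σ (R.fill (.leaf A)) C → IDer σ (R.fill (.leaf (.with' A B))) C
  | withL₂ (R : Ctx (IForm I)) {A B C : IForm I} :
      IDer σ (R.fill (.leaf B)) C → IDer σ (R.fill (.leaf (.with' A B))) C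
  | withR {Γ : Struct (IForm I)} {A B : IForm I} :
      IDer σ Γ A → IDer σ Γ B → IDer σ Γ (.with' A B)
  | oneL (R : Ctx (IForm I)) {C : IForm I} :
      IDer σ (R.fill .emp) C → IDer σ (R.fill (.leaf .one)) C
  | oneR : IDer σ .emp .one
  | topR (Γ : Struct (IForm I)) : IDer σ Γ .top
  | prom {Γ Γ' : Struct (IForm I)} {i : I} {A : IForm I} :
      IUpSet σ i Γ Γ' → IDer σ Γ' A → IDer σ Γ (.bang i A)
  | der (R : Ctx (IForm I)) {i : I} {A C : IForm I} :
      IDer σ (R.fill (.leaf A)) C → IDer σ (R.fill (.leaf (.bang i A))) C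
  | wk (R : Ctx (IForm I)) {Δ : Struct (IForm I)} {C : IForm I} (h : BAll σ .W Δ) :
      IDer σ (R.fill .emp) C → IDer σ (R.fill Δ) C
  | ctr (R : Ctx2 (IForm I)) {Δ : Struct (IForm I)} {C : IForm I} (h : BAll σ .C Δ) :
      IDer σ ((R.fillFst Δ).fill Δ) C → IDer σ ((R.fillFst .emp).fill Δ) C
  | e1 (R : Ctx (IForm I)) {Δ Θ : Struct (IForm I)} {C : IForm I} (h : BAll σ .E Δ) :
      IDer σ (R.fill (Θ.comma Δ)) C → IDer σ (R.fill (Δ.comma Θ)) C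
  | e2 (R : Ctx (IForm I)) {Δ Θ : Struct (IForm I)} {C : IForm I} (h : BAll σ .E Δ) :
      IDer σ (R.fill (Δ.comma Θ)) C → IDer σ (R.fill (Θ.comma Δ)) C
  | a1 (R : Ctx (IForm I)) {Δ1 Δ2 Δ3 : Struct (IForm I)} {C : IForm I} (h : BAll σ .A1 Δ1) :
      IDer σ (R.fill ((Δ1.comma Δ2).comma Δ3)) C →
      IDer σ (R.fill (Δ1.comma (Δ2.comma Δ3))) C
  | a2 (R : Ctx (IForm I)) {Δ1 Δ2 Δ3 : Struct (IForm I)} {C : IForm I} (h : BAll σ .A2 Δ3) :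
      IDer σ (R.fill (Δ1.comma (Δ2.comma Δ3))) C →
      IDer σ (R.fill ((Δ1.comma Δ2).comma Δ3)) C

end NACLL

namespace NACLL

/-!
Exchange and associativity at the root of a CacLL sequent move the hole of any context `R` to the
left end: `⊢ R[X]` is derivable iff `⊢ (X, R.desi)` is. Hence the tensor rule and the
subexponential exchange and associativity rules, stated only at the root, are derivable in every
context, and each left rule of acLL becomes the rule for the dual connective inside the mirrored
context. Soundness is then an induction on acLL derivations.
-/

section Structures

variable {F : Type}

theorem Struct.comma_emp (Γ : Struct F) : Γ.comma .emp = Γ := by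
  cases Γ <;> rfl

theorem Struct.comma_eq_pair {Γ Δ : Struct F} (hΓ : Γ ≠ .emp) (hΔ : Δ ≠ .emp) :
    Γ.comma Δ = .pair Γ Δ := by
  cases Γ <;> cases Δ <;> first | rfl | contradiction

end Structures

section Classical

variable {I : Type} {σ : Sig I} {b : Bool}

theorem CForm.dual_dual (A : CForm I) : A.dual.dual = A := by
  induction A <;> simp_all only [CForm.dual]

theorem QAll.ne_emp {ax : SubAx} {Γ : Struct (CForm I)} (h : QAll σ ax Γ) : Γ ≠ .emp := by
  rintro rfl
  cases h

theorem QAll.comma {ax : SubAx} {Γ Δ : Struct (CForm I)} (hΓ : QAll σ ax Γ)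
    (hΔ : QAll σ ax Δ) : QAll σ ax (Γ.comma Δ) :=
  Struct.comma_eq_pair hΓ.ne_emp hΔ.ne_emp ▸ hΓ.pair hΔ

theorem UpSet.comma {i : I} {Γ Γ' Δ Δ' : Struct (CForm I)} (hΓ : UpSet σ i Γ Γ')
    (hΔ : UpSet σ i Δ Δ') : UpSet σ i (Γ.comma Δ) (Γ'.comma Δ') := by
  rcases eq_or_ne Γ .emp with rfl | hΓ_ne
  · cases hΓ
    exact hΔ
  rcases eq_or_ne Δ .emp with rfl | hΔ_ne
  · cases hΔ
    simpa only [Struct.comma_emp] using hΓ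
  rw [Struct.comma_eq_pair hΓ_ne hΔ_ne]
  exact hΓ.pair hΔ

namespace CDer

theorem identity (A : CForm I) : CDer σ b ((Struct.leaf A.dual).comma (.leaf A)) := by
  induction A with
  | pos a => exact initN a
  | neg a => exact initP a
  | tensor A B ihA ihB => exact par (.pairL .hole (.leaf (.tensor A B))) (tensor ihB ihA)
  | par A B ihA ihB =>
    exact par (.pairR (.leaf (.tensor B.dual A.dual)) .hole)
      (exch (tensor (exch ihA) (exch ihB)))
  | one => exact bot (.pairL .hole (.leaf .one)) one
  | bot => exact bot (.pairR (.leaf .one) .hole) one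
  | oplus A B ihA ihB =>
    exact with' (.pairL .hole (.leaf (.oplus A B)))
      (oplus₁ (.pairR (.leaf A.dual) .hole) ihA) (oplus₂ (.pairR (.leaf B.dual) .hole) ihB)
  | with' A B ihA ihB =>
    exact with' (.pairR (.leaf (.oplus A.dual B.dual)) .hole)
      (oplus₁ (.pairL .hole (.leaf A)) ihA) (oplus₂ (.pairL .hole (.leaf B)) ihB)
  | zero => exact top (.pairL .hole (.leaf .zero))
  | top => exact top (.pairR (.leaf .zero) .hole)
  | bang i A ih => exact prom (.keep (σ.le_refl i)) (der (.pairL .hole (.leaf A)) ih)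
  | quest i A ih =>
    exact exch (prom (.keep (σ.le_refl i)) (der (.pairL .hole (.leaf A.dual)) (exch ih)))

theorem comma_comm_iff {Γ Δ : Struct (CForm I)} : CDer σ b (Γ.comma Δ) ↔ CDer σ b (Δ.comma Γ) :=
  ⟨exch, exch⟩

theorem comma_assoc_iff {Γ Δ Θ : Struct (CForm I)} :
    CDer σ b ((Γ.comma Δ).comma Θ) ↔ CDer σ b (Γ.comma (Δ.comma Θ)) :=
  ⟨assoc₂, assoc₁⟩

theorem fill_iff_comma_desi (R : Ctx (CForm I)) (X : Struct (CForm I)) :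
    CDer σ b (R.fill X) ↔ CDer σ b (X.comma R.desi) := by
  induction R using Ctx.desi.induct with
  | case1 => rw [Ctx.fill, Ctx.desi, Struct.comma_emp]
  | case2 R Δ ih =>
    rw [Ctx.desi, ← ih]
    exact comma_comm_iff
  | case3 Γ =>
    rw [Ctx.desi]
    exact comma_comm_iff
  | case4 Γ Δ R ih =>
    rw [Ctx.desi, ← ih]
    exact comma_assoc_iff.symm
  | case5 Γ R Θ ih =>
    rw [Ctx.desi, ← ih]
    exact comma_comm_iff.trans (comma_assoc_iff.trans comma_comm_iff)

section DeepRules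

variable (R : Ctx (CForm I)) {Γ Δ Θ : Struct (CForm I)} {F G : CForm I}

theorem tensor_fill_left (hF : CDer σ b (R.fill (.leaf F))) (hG : CDer σ b (Δ.comma (.leaf G))) :
    CDer σ b (R.fill ((Struct.leaf (.tensor F G)).comma Δ)) := by
  rw [fill_iff_comma_desi] at hF ⊢
  exact assoc₁ (exch (tensor hG (exch hF)))

theorem tensor_fill_right (hG : CDer σ b (R.fill (.leaf G))) (hF : CDer σ b (Δ.comma (.leaf F))) :
    CDer σ b (R.fill (Δ.comma (.leaf (.tensor F G)))) := by
  rw [fill_iff_comma_desi] at hG ⊢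
  exact exch (assoc₂ (tensor (exch hG) hF))

theorem qE_fill_left (hΔ : QAll σ .E Δ) (h : CDer σ b (R.fill (Γ.comma Δ))) :
    CDer σ b (R.fill (Δ.comma Γ)) := by
  rw [fill_iff_comma_desi] at h ⊢
  exact assoc₁ (exch (qE hΔ (assoc₁ (exch h))))

theorem qE_fill_right (hΔ : QAll σ .E Δ) (h : CDer σ b (R.fill (Δ.comma Γ))) :
    CDer σ b (R.fill (Γ.comma Δ)) := by
  rw [fill_iff_comma_desi] at h ⊢
  exact exch (assoc₂ (qE hΔ (exch (assoc₂ h))))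

theorem qA1_fill (hΘ : QAll σ .A1 Θ) (h : CDer σ b (R.fill (Γ.comma (Δ.comma Θ)))) :
    CDer σ b (R.fill ((Γ.comma Δ).comma Θ)) := by
  rw [fill_iff_comma_desi] at h ⊢
  exact exch (assoc₂ (qA1 hΘ (assoc₁ (assoc₁ (exch h)))))

theorem qA2_fill (hΓ : QAll σ .A2 Γ) (h : CDer σ b (R.fill ((Γ.comma Δ).comma Θ))) :
    CDer σ b (R.fill (Γ.comma (Δ.comma Θ))) := by
  rw [fill_iff_comma_desi] at h ⊢
  exact assoc₁ (exch (qA2 hΓ (exch (assoc₂ (assoc₂ h)))))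

end DeepRules

end CDer

end Classical

section Translation

variable {I : Type} {σ : Sig I} {b : Bool}

theorem negTrans_comma (Γ Δ : Struct (IForm I)) :
    negTrans (Γ.comma Δ) = (negTrans Δ).comma (negTrans Γ) := by
  cases Γ <;> cases Δ <;> first | rfl | exact (Struct.comma_emp _).symm

theorem BAll.negTrans {ax : SubAx} {Γ : Struct (IForm I)} (h : BAll σ ax Γ) :
    QAll σ ax (negTrans Γ) := by
  induction h with
  | leaf h => exact .leaf h
  | pair _ _ ihΓ ihΔ => exact ihΔ.comma ihΓ

theorem IUpSet.negTrans {i : I} {Γ Γ' : Struct (IForm I)} (h : IUpSet σ i Γ Γ') :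
    UpSet σ i (negTrans Γ) (negTrans Γ') := by
  induction h with
  | emp => exact .emp
  | keep h => exact .keep h
  | drop h hW => exact .drop h hW
  | pair _ _ ihΓ ihΔ =>
    rw [negTrans_comma]
    exact ihΔ.comma ihΓ

/-- The negative translation of one-hole contexts, which mirrors a context just as `negTrans`
mirrors a structure; the hole is kept. -/
def negTransCtx : Ctx (IForm I) → Ctx (CForm I)
  | .hole => .hole
  | .pairL R Δ => .pairR (negTrans Δ) (negTransCtx R)
  | .pairR Γ R => .pairL (negTransCtx R) (negTrans Γ)

/-- The negative translation of two-hole contexts. Mirroring exchanges the positions of the two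
holes, but the first hole remains the designated one. -/
def negTransCtx2 : Ctx2 (IForm I) → Ctx2 (CForm I)
  | .splitLR R₁ R₂ => .splitRL (negTransCtx R₂) (negTransCtx R₁)
  | .splitRL R₂ R₁ => .splitLR (negTransCtx R₁) (negTransCtx R₂)
  | .pairL R Δ => .pairR (negTrans Δ) (negTransCtx2 R)
  | .pairR Γ R => .pairL (negTransCtx2 R) (negTrans Γ)

theorem negTrans_fill (R : Ctx (IForm I)) (X : Struct (IForm I)) :
    negTrans (R.fill X) = (negTransCtx R).fill (negTrans X) := by
  induction R <;> simp_all only [negTransCtx, Ctx.fill, negTrans_comma]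

theorem negTransCtx_fillFst (R : Ctx2 (IForm I)) (X : Struct (IForm I)) :
    negTransCtx (R.fillFst X) = (negTransCtx2 R).fillFst (negTrans X) := by
  induction R <;> simp_all only [negTransCtx, negTransCtx2, Ctx2.fillFst, negTrans_fill]

namespace CDer

theorem negTrans_fill_mono (R : Ctx (IForm I)) {X Y : Struct (IForm I)} {D : Struct (CForm I)}
    (hXY : ∀ S : Ctx (CForm I), CDer σ b (S.fill (negTrans X)) → CDer σ b (S.fill (negTrans Y)))
    (hX : CDer σ b ((negTrans (R.fill X)).comma D)) :
    CDer σ b ((negTrans (R.fill Y)).comma D) := by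
  rw [negTrans_fill] at hX ⊢
  exact hXY (.pairL (negTransCtx R) D) hX

section TranslatedRules

variable {Γ Δ Θ : Struct (IForm I)} {A B : IForm I}

theorem negTrans_impL (S : Ctx (CForm I))
    (hA : CDer σ b ((negTrans Δ).comma (.leaf A.pos)))
    (hB : CDer σ b (S.fill (negTrans (.leaf B)))) :
    CDer σ b (S.fill (negTrans (Δ.comma (.leaf (.imp A B))))) := by
  simpa only [negTrans_comma, negTrans, IForm.pos, CForm.dual, CForm.dual_dual] using
    tensor_fill_left S hB hA

theorem negTrans_limpL (S : Ctx (CForm I))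
    (hA : CDer σ b ((negTrans Δ).comma (.leaf A.pos)))
    (hB : CDer σ b (S.fill (negTrans (.leaf B)))) :
    CDer σ b (S.fill (negTrans ((Struct.leaf (.limp B A)).comma Δ))) := by
  simpa only [negTrans_comma, negTrans, IForm.pos, CForm.dual, CForm.dual_dual] using
    tensor_fill_right S hB hA

theorem negTrans_impR
    (h : CDer σ b ((negTrans ((Struct.leaf A).comma Γ)).comma (.leaf B.pos))) :
    CDer σ b ((negTrans Γ).comma (.leaf (IForm.imp A B).pos)) := by
  rw [negTrans_comma] at h
  exact par (.pairR (negTrans Γ) .hole) (assoc₂ h)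

theorem negTrans_limpR
    (h : CDer σ b ((negTrans (Γ.comma (.leaf A))).comma (.leaf B.pos))) :
    CDer σ b ((negTrans Γ).comma (.leaf (IForm.limp B A).pos)) := by
  rw [negTrans_comma] at h
  exact par (.pairR (negTrans Γ) .hole) (assoc₂ (exch (assoc₂ h)))

theorem negTrans_oplusL (R : Ctx (IForm I)) {D : Struct (CForm I)}
    (hA : CDer σ b ((negTrans (R.fill (.leaf A))).comma D))
    (hB : CDer σ b ((negTrans (R.fill (.leaf B))).comma D)) :
    CDer σ b ((negTrans (R.fill (.leaf (.oplus A B)))).comma D) := by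
  rw [negTrans_fill] at hA hB ⊢
  exact with' (.pairL (negTransCtx R) D) hA hB

theorem negTrans_ctr (R : Ctx2 (IForm I)) {D : Struct (CForm I)} (hΔ : BAll σ .C Δ)
    (h : CDer σ b ((negTrans ((R.fillFst Δ).fill Δ)).comma D)) :
    CDer σ b ((negTrans ((R.fillFst .emp).fill Δ)).comma D) := by
  rw [negTrans_fill, negTransCtx_fillFst] at h ⊢
  exact qC (.pairL (negTransCtx2 R) D) hΔ.negTrans h

theorem negTrans_e1 (S : Ctx (CForm I)) (hΓ : BAll σ .E Γ)
    (h : CDer σ b (S.fill (negTrans (Δ.comma Γ)))) :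
    CDer σ b (S.fill (negTrans (Γ.comma Δ))) := by
  simp only [negTrans_comma] at h ⊢
  exact qE_fill_right S hΓ.negTrans h

theorem negTrans_e2 (S : Ctx (CForm I)) (hΓ : BAll σ .E Γ)
    (h : CDer σ b (S.fill (negTrans (Γ.comma Δ)))) :
    CDer σ b (S.fill (negTrans (Δ.comma Γ))) := by
  simp only [negTrans_comma] at h ⊢
  exact qE_fill_left S hΓ.negTrans h

theorem negTrans_a1 (S : Ctx (CForm I)) (hΓ : BAll σ .A1 Γ)
    (h : CDer σ b (S.fill (negTrans ((Γ.comma Δ).comma Θ)))) :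
    CDer σ b (S.fill (negTrans (Γ.comma (Δ.comma Θ)))) := by
  simp only [negTrans_comma] at h ⊢
  exact qA1_fill S hΓ.negTrans h

theorem negTrans_a2 (S : Ctx (CForm I)) (hΘ : BAll σ .A2 Θ)
    (h : CDer σ b (S.fill (negTrans (Γ.comma (Δ.comma Θ))))) :
    CDer σ b (S.fill (negTrans ((Γ.comma Δ).comma Θ))) := by
  simp only [negTrans_comma] at h ⊢
  exact qA2_fill S hΘ.negTrans h

end TranslatedRules

end CDer

end Translation

/-- **Soundness of the embedding.**  For any subexponential signature
(associativity allowed): if an acLL sequent `Γ ⊢ A` is provable in acLL, then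
`⊢ (Γ̂⊥, Â)` is provable in CacLL over the same signature. -/
theorem embedding_sound {I : Type} (σ : Sig I)
    (Γ : Struct (IForm I)) (A : IForm I) (h : IDer σ Γ A) :
    CDer σ false ((negTrans Γ).comma (.leaf A.pos)) := by
  induction h with
  | init A => exact .identity A.pos
  | tensorL R _ ih => exact ih.negTrans_fill_mono R fun S => .par S
  | tensorR _ _ ihA ihB => exact negTrans_comma _ _ ▸ .tensor ihB ihA
  | impL R _ _ ihA ihB => exact ihB.negTrans_fill_mono R fun S => .negTrans_impL S ihA
  | impR _ ih => exact .negTrans_impR ih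
  | limpL R _ _ ihA ihB => exact ihB.negTrans_fill_mono R fun S => .negTrans_limpL S ihA
  | limpR _ ih => exact .negTrans_limpR ih
  | oplusL R _ _ ihA ihB => exact .negTrans_oplusL R ihA ihB
  | oplusR₁ _ ih => exact .oplus₁ (.pairR _ .hole) ih
  | oplusR₂ _ ih => exact .oplus₂ (.pairR _ .hole) ih
  | withL₁ R _ ih => exact ih.negTrans_fill_mono R fun S => .oplus₁ S
  | withL₂ R _ ih => exact ih.negTrans_fill_mono R fun S => .oplus₂ S
  | withR _ _ ihA ihB => exact .with' (.pairR _ .hole) ihA ihB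
  | oneL R _ ih => exact ih.negTrans_fill_mono R fun S => .bot S
  | oneR => exact .one
  | topR Γ => exact .top (.pairR (negTrans Γ) .hole)
  | prom h _ ih => exact .prom h.negTrans ih
  | der R _ ih => exact ih.negTrans_fill_mono R fun S => .der S
  | wk R h _ ih => exact ih.negTrans_fill_mono R fun S => .qW S h.negTrans
  | ctr R h _ ih => exact .negTrans_ctr R h ih
  | e1 R h _ ih => exact ih.negTrans_fill_mono R fun S => .negTrans_e1 S h
  | e2 R h _ ih => exact ih.negTrans_fill_mono R fun S => .negTrans_e2 S h
  | a1 R h _ ih => exact ih.negTrans_fill_mono R fun S => .negTrans_a1 S h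
  | a2 R h _ ih => exact ih.negTrans_fill_mono R fun S => .negTrans_a2 S h

end NACLL
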